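/- Suppose that J is ferromagnetic and let t ≥ 0. If n is even, then there exist real numbers 0 < x_1 ≤ x_2 ≤ … ≤ x_{n/2} ≤ π/2 such that for every x ∈ ℂ, Z_{G,t}(x) = Z_{G,t}(0) · ∏_{j=1}^{n/2} (sin²x_j − sin²x)/sin²x_j. If n is odd, then there exist real numbers 0 < x_1 ≤ x_2 ≤ … ≤ x_{(n−1)/2} ≤ π/2 such that for every x ∈ ℂ, Z_{G,t}(x) = Z_{G,t}(0) · cos(x) · ∏_{j=1}^{(n−1)/2} (sin²x_j − sin²x)/sin²x_j. -/

import Mathlib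

open scoped Real

noncomputable def spin (b : Bool) : ℝ := if b then 1 else -1

noncomputable def pairProd {V : Type} (σ : V → Bool) (e : Sym2 V) : ℝ :=
  Sym2.lift ⟨fun u v => spin (σ u) * spin (σ v), fun _ _ => mul_comm _ _⟩ e

/-- The Ising partition function `Z_{G,t}(x)` with an extra coupling `t` at the edge
`u₀v₀`, couplings `J` on the edge set `E`, and (complex) external field `i·x`. -/
noncomputable def IsingZ {V : Type} [Fintype V] [DecidableEq V]
    (E : Finset (Sym2 V)) (J : Sym2 V → ℝ) (u₀ v₀ : V) (t x : ℂ) : ℂ :=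
  ∑ σ : V → Bool, Complex.exp
    (t * ((spin (σ u₀) * spin (σ v₀) : ℝ) : ℂ)
      + ((∑ e ∈ E, J e * pairProd σ e : ℝ) : ℂ)
      + Complex.I * x * ((∑ u, spin (σ u) : ℝ) : ℂ))

section
variable {V : Type}

/-- The Boltzmann weight of a configuration at zero external field. -/
noncomputable def isingWeight (E : Finset (Sym2 V)) (J : Sym2 V → ℝ) (u₀ v₀ : V) (t : ℝ)
    (σ : V → Bool) : ℝ :=
  Real.exp (t * (spin (σ u₀) * spin (σ v₀)) + ∑ e ∈ E, J e * pairProd σ e)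

theorem spin_not (b : Bool) : spin (!b) = -spin b := by cases b <;> simp [spin]

theorem isingWeight_not (E : Finset (Sym2 V)) (J : Sym2 V → ℝ) (u₀ v₀ : V) (t : ℝ)
    (σ : V → Bool) :
    isingWeight E J u₀ v₀ t (fun u => !σ u) = isingWeight E J u₀ v₀ t σ := by
  have h (e : Sym2 V) : pairProd (fun u => !σ u) e = pairProd σ e := by
    induction e using Sym2.ind with
    | _ u v => simp [pairProd, spin_not]
  simp [isingWeight, h, spin_not]

variable [Fintype V]

/-- The total spin of a configuration. -/
def totalSpin (σ : V → Bool) : ℤ := ∑ u, if σ u then 1 else -1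

theorem sum_spin (σ : V → Bool) : ∑ u, spin (σ u) = totalSpin σ := by
  simp only [totalSpin, Int.cast_sum, spin]
  refine Finset.sum_congr rfl fun u _ => ?_
  split_ifs <;> simp

theorem totalSpin_not (σ : V → Bool) : totalSpin (fun u => !σ u) = -totalSpin σ := by
  simp only [totalSpin, ← Finset.sum_neg_distrib]
  refine Finset.sum_congr rfl fun u _ => ?_
  by_cases h : σ u <;> simp [h]

theorem totalSpin_true : totalSpin (fun _ : V => true) = Fintype.card V := by
  simp [totalSpin]

theorem totalSpin_eq (σ : V → Bool) :
    totalSpin σ = 2 * (Finset.univ.filter fun u => σ u = true).card - Fintype.card V := by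
  have h : ∀ u, (if σ u then (1 : ℤ) else -1) = 2 * (if σ u = true then 1 else 0) - 1 := by
    intro u; split_ifs <;> simp
  rw [totalSpin, Finset.sum_congr rfl fun u _ => h u, Finset.sum_sub_distrib, ← Finset.mul_sum]
  simp

theorem natAbs_totalSpin_le (σ : V → Bool) : (totalSpin σ).natAbs ≤ Fintype.card V := by
  have := totalSpin_eq σ
  have := Finset.card_le_univ (Finset.univ.filter fun u => σ u = true)
  omega

theorem natAbs_totalSpin_mod_two (σ : V → Bool) :
    (totalSpin σ).natAbs % 2 = Fintype.card V % 2 := by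
  have := totalSpin_eq σ
  omega

end

theorem asano_contraction {a b c d : ℂ}
    (h : ∀ z w : ℂ, ‖z‖ < 1 → ‖w‖ < 1 → a + b * z + c * w + d * (z * w) ≠ 0)
    {z : ℂ} (hz : ‖z‖ < 1) : a + d * z ≠ 0 := by
  intro h0
  have ha : a ≠ 0 := by simpa using h 0 0 (by simp) (by simp)
  have hd : d ≠ 0 := by rintro rfl; simp_all
  obtain ⟨s, hs⟩ := IsAlgClosed.exists_eq_mul_self (discrim d (b + c) a)
  set r₁ := (-(b + c) + s) / (2 * d) with hr₁
  set r₂ := (-(b + c) - s) / (2 * d) with hr₂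
  have key : ∀ r, r = r₁ ∨ r = r₂ → 1 ≤ ‖r‖ := by
    intro r hr
    by_contra! hlt
    refine h r r hlt hlt ?_
    linear_combination (quadratic_eq_zero_iff hd hs r).2 hr
  have hprod : r₁ * r₂ = -z := by
    have : r₁ * r₂ = a / d := by
      rw [hr₁, hr₂]; field_simp
      rw [discrim] at hs
      linear_combination hs
    rw [this]; field_simp; linear_combination h0
  have h1 := key r₁ (Or.inl rfl)
  have h2 := key r₂ (Or.inr rfl)
  have := congrArg norm hprod
  rw [norm_mul, norm_neg] at this
  nlinarith

theorem edge_factor_ne_zero {l : ℝ} (h0 : 0 ≤ l) (h1 : l ≤ 1) {z w : ℂ}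
    (hz : ‖z‖ < 1) (hw : ‖w‖ < 1) : 1 + l * z + (l + z) * w ≠ 0 := by
  intro h
  have hne : (1 : ℂ) + l * z ≠ 0 := by
    intro h'
    have h2 : ‖(l * z : ℂ)‖ = 1 := by
      rw [show (l * z : ℂ) = -1 by linear_combination h']; simp
    rw [norm_mul, Complex.norm_real, Real.norm_of_nonneg h0] at h2
    nlinarith [norm_nonneg z]
  have heq : ‖1 + l * z‖ = ‖l + z‖ * ‖w‖ := by
    rw [← norm_mul, ← norm_neg]; congr 1; linear_combination -h
  have hpos : 0 < ‖1 + l * z‖ := norm_pos_iff.2 hne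
  have hlt : ‖1 + l * z‖ < ‖l + z‖ := by
    have : 0 ≤ ‖(l + z : ℂ)‖ := norm_nonneg _
    nlinarith [norm_nonneg w]
  have hsq : ‖1 + l * z‖ ^ 2 - ‖l + z‖ ^ 2 = (1 - l ^ 2) * (1 - ‖z‖ ^ 2) := by
    simp only [Complex.sq_norm, Complex.normSq_apply]
    simp; ring
  have : 0 ≤ (1 - l ^ 2) * (1 - ‖z‖ ^ 2) := by
    apply mul_nonneg <;> nlinarith [norm_nonneg z]
  nlinarith [norm_nonneg (1 + l * z)]

theorem bilinear_ne_zero_of_edge {a b c d : ℂ} {l : ℝ} (h0 : 0 ≤ l) (h1 : l ≤ 1)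
    (h : ∀ z w : ℂ, ‖z‖ < 1 → ‖w‖ < 1 → a + b * z + c * w + d * (z * w) ≠ 0)
    {z w : ℂ} (hz : ‖z‖ < 1) (hw : ‖w‖ < 1) :
    a + l * b * z + l * c * w + d * (z * w) ≠ 0 := by
  have key : ∀ w w' : ℂ, ‖w‖ < 1 → ‖w'‖ < 1 →
      (a + c * w) * (1 + l * w') + (b + d * w) * (l + w') * z ≠ 0 := by
    intro w w' hw hw'
    refine asano_contraction (b := (b + d * w) * (1 + l * w'))
      (c := (a + c * w) * (l + w')) ?_ hz
    intro s s' hs hs'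
    have := mul_ne_zero (h s w hs hw) (edge_factor_ne_zero h0 h1 hw' hs')
    convert this using 1; ring
  have := asano_contraction (a := a + l * b * z) (b := c + l * d * z) (c := l * a + b * z)
    (d := l * c + d * z) ?_ hw
  · convert this using 1; ring
  · intro s s' hs hs'
    convert key s s' hs hs' using 1; ring

/-- The multi-affine polynomial with coefficients `f`. -/
noncomputable def spinPoly {V : Type} [Fintype V] [DecidableEq V]
    (f : (V → Bool) → ℂ) (z : V → ℂ) : ℂ :=
  ∑ σ : V → Bool, f σ * ∏ u, if σ u then z u else 1

/-- Nonvanishing of `spinPoly f` on the open unit polydisc. -/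
def LeeYang {V : Type} [Fintype V] [DecidableEq V] (f : (V → Bool) → ℂ) : Prop :=
  ∀ z : V → ℂ, (∀ u, ‖z u‖ < 1) → spinPoly f z ≠ 0

section
variable {V : Type} [Fintype V] [DecidableEq V]

theorem leeYang_one : LeeYang (fun _ : V → Bool => 1) := by
  intro z hz
  have : spinPoly (fun _ : V → Bool => 1) z = ∏ u, (1 + z u) := by
    have := (Finset.prod_univ_sum (fun _ : V => (Finset.univ : Finset Bool))
      (fun u b => if b then z u else 1)).symm
    simp only [Fintype.piFinset_univ] at this
    simp only [spinPoly, one_mul, this]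
    simp [add_comm]
  rw [this, Finset.prod_ne_zero_iff]
  intro u _ h
  have := hz u
  rw [show z u = -1 by linear_combination h] at this
  simp at this

theorem LeeYang.const_mul {f : (V → Bool) → ℂ} (hf : LeeYang f) {c : ℂ} (hc : c ≠ 0) :
    LeeYang (fun σ => c * f σ) := by
  intro z hz
  have : spinPoly (fun σ => c * f σ) z = c * spinPoly f z := by
    simp [spinPoly, Finset.mul_sum, mul_assoc]
  rw [this]
  exact mul_ne_zero hc (hf z hz)

theorem spinPoly_update (f : (V → Bool) → ℂ) {u v : V} (huv : u ≠ v) (z : V → ℂ) :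
    ∃ a b c d : ℂ, ∀ (l s t : ℂ),
      spinPoly (fun σ => (if σ u = σ v then 1 else l) * f σ)
        (Function.update (Function.update z u s) v t)
        = a + l * b * s + l * c * t + d * (s * t) := by
  let g : (V → Bool) → ℂ := fun σ =>
    f σ * ∏ w ∈ (Finset.univ.erase u).erase v, if σ w then z w else 1
  let A : Bool → Bool → ℂ := fun p q => ∑ σ, if σ u = p ∧ σ v = q then g σ else 0
  refine ⟨A false false, A true false, A false true, A true true, fun l s t => ?_⟩
  simp only [A, spinPoly, Finset.mul_sum, Finset.sum_mul, ← Finset.sum_add_distrib]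
  refine Finset.sum_congr rfl fun σ _ => ?_
  rw [← Finset.mul_prod_erase _ _ (Finset.mem_univ u),
    ← Finset.mul_prod_erase _ _ (Finset.mem_erase.2 ⟨huv.symm, Finset.mem_univ v⟩)]
  have : ∏ w ∈ (Finset.univ.erase u).erase v,
      (if σ w then Function.update (Function.update z u s) v t w else 1)
      = ∏ w ∈ (Finset.univ.erase u).erase v, if σ w then z w else 1 := by
    refine Finset.prod_congr rfl fun w hw => ?_
    simp only [Finset.mem_erase] at hw
    rw [Function.update_of_ne hw.1, Function.update_of_ne hw.2.1]
  rw [this, Function.update_self, Function.update_of_ne huv, Function.update_self]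
  cases hu : σ u <;> cases hv : σ v <;> simp [g] <;> ring

theorem LeeYang.edge {f : (V → Bool) → ℂ} (hf : LeeYang f) {u v : V} (huv : u ≠ v) {l : ℝ}
    (h0 : 0 ≤ l) (h1 : l ≤ 1) :
    LeeYang (fun σ => (if σ u = σ v then 1 else (l : ℂ)) * f σ) := by
  intro z hz
  obtain ⟨a, b, c, d, h⟩ := spinPoly_update f huv z
  have hz' : z = Function.update (Function.update z u (z u)) v (z v) := by simp
  rw [hz', h]
  refine bilinear_ne_zero_of_edge h0 h1 ?_ (hz u) (hz v)
  intro s t hs ht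
  have hs1 := h 1 s t
  simp only [ite_self, one_mul] at hs1
  rw [← hs1]
  apply hf
  intro w
  rcases eq_or_ne w v with rfl | hw
  · simpa
  rw [Function.update_of_ne hw]
  rcases eq_or_ne w u with rfl | hw'
  · simpa
  · rw [Function.update_of_ne hw']; exact hz w
theorem LeeYang.ising_edge {f : (V → Bool) → ℂ} (hf : LeeYang f) (u v : V) {j : ℝ} (hj : 0 ≤ j) :
    LeeYang (fun σ => (Real.exp (j * (spin (σ u) * spin (σ v))) : ℂ) * f σ) := by
  have hexp (a : ℝ) : (Real.exp a : ℂ) ≠ 0 := by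
    exact_mod_cast (Real.exp_pos a).ne'
  rcases eq_or_ne u v with rfl | huv
  · convert hf.const_mul (hexp j) using 5 with σ
    cases σ u <;> simp [spin]
  · have hl : Real.exp (-2 * j) ≤ 1 := Real.exp_le_one_iff.2 (by linarith)
    have hmul : Real.exp (-j) = Real.exp j * Real.exp (-2 * j) := by
      rw [← Real.exp_add]; ring_nf
    convert (hf.edge huv (Real.exp_pos _).le hl).const_mul (hexp j) using 2 with σ
    rw [← mul_assoc (Real.exp j : ℂ)]
    refine congrArg (· * f σ) ?_
    cases σ u <;> cases σ v <;> simp [spin, -Complex.ofReal_exp, hmul]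

theorem leeYang_isingWeight (E : Finset (Sym2 V)) (J : Sym2 V → ℝ) (u₀ v₀ : V)
    (hJ : ∀ e ∈ E, 0 ≤ J e) {t : ℝ} (ht : 0 ≤ t) :
    LeeYang (fun σ => (isingWeight E J u₀ v₀ t σ : ℂ)) := by
  induction E using Finset.induction_on with
  | empty => simpa [isingWeight] using leeYang_one.ising_edge u₀ v₀ ht
  | insert e E he ih =>
    have ih := ih fun e' he' => hJ e' (Finset.mem_insert_of_mem he')
    induction e using Sym2.ind with
    | _ u v =>
      convert ih.ising_edge u v (hJ _ (Finset.mem_insert_self _ _)) using 2 with σ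
      rw [← Complex.ofReal_mul, isingWeight, isingWeight, ← Real.exp_add, Finset.sum_insert he]
      congr 2
      simp only [pairProd, Sym2.lift_mk]
      ring

theorem isingZ_eq_sum (E : Finset (Sym2 V)) (J : Sym2 V → ℝ) (u₀ v₀ : V) (t : ℝ) (x : ℂ) :
    IsingZ E J u₀ v₀ t x = ∑ σ, (isingWeight E J u₀ v₀ t σ : ℂ)
      * Complex.exp (Complex.I * x * totalSpin σ) := by
  refine Finset.sum_congr rfl fun σ _ => ?_
  rw [sum_spin, Complex.exp_add, isingWeight]
  push_cast
  rfl

theorem isingZ_neg (E : Finset (Sym2 V)) (J : Sym2 V → ℝ) (u₀ v₀ : V) (t : ℝ) (x : ℂ) :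
    IsingZ E J u₀ v₀ t (-x) = IsingZ E J u₀ v₀ t x := by
  rw [isingZ_eq_sum, isingZ_eq_sum,
    ← Equiv.sum_comp (Equiv.piCongrRight fun _ : V => Equiv.boolNot)]
  refine Finset.sum_congr rfl fun σ _ => ?_
  have : (Equiv.piCongrRight fun _ : V => Equiv.boolNot) σ = fun u => !σ u := rfl
  rw [this, isingWeight_not, totalSpin_not]
  simp

theorem isingZ_eq_sum_cos (E : Finset (Sym2 V)) (J : Sym2 V → ℝ) (u₀ v₀ : V) (t : ℝ) (x : ℂ) :
    IsingZ E J u₀ v₀ t x = ∑ σ, (isingWeight E J u₀ v₀ t σ : ℂ)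
      * Complex.cos ((totalSpin σ).natAbs * x) := by
  have h : IsingZ E J u₀ v₀ t x = (IsingZ E J u₀ v₀ t x + IsingZ E J u₀ v₀ t (-x)) / 2 := by
    rw [isingZ_neg]; ring
  rw [h, isingZ_eq_sum, isingZ_eq_sum, ← Finset.sum_add_distrib, Finset.sum_div]
  refine Finset.sum_congr rfl fun σ _ => ?_
  have hcos : Complex.cos ((totalSpin σ).natAbs * x) = Complex.cos (totalSpin σ * x) := by
    rcases Int.natAbs_eq (totalSpin σ) with h | h <;>
    · conv_rhs => rw [h]
      simp
  rw [hcos, Complex.cos, ← mul_add, mul_div_assoc]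
  congr 4 <;> ring

theorem isingZ_eq_spinPoly (E : Finset (Sym2 V)) (J : Sym2 V → ℝ) (u₀ v₀ : V) (t : ℝ) (x : ℂ) :
    IsingZ E J u₀ v₀ t x = Complex.exp (-(Complex.I * x * Fintype.card V))
      * spinPoly (fun σ => (isingWeight E J u₀ v₀ t σ : ℂ))
        (fun _ => Complex.exp (2 * Complex.I * x)) := by
  rw [isingZ_eq_sum, spinPoly, Finset.mul_sum]
  refine Finset.sum_congr rfl fun σ _ => ?_
  rw [Finset.prod_ite, Finset.prod_const, Finset.prod_const_one, mul_one, ← Complex.exp_nat_mul,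
    mul_left_comm, ← Complex.exp_add, totalSpin_eq]
  push_cast
  congr 2
  ring

/-- The Lee–Yang theorem: the zeros of the partition function are real. -/
theorem im_eq_zero_of_isingZ_eq_zero (E : Finset (Sym2 V)) (J : Sym2 V → ℝ) (u₀ v₀ : V)
    (hJ : ∀ e ∈ E, 0 ≤ J e) {t : ℝ} (ht : 0 ≤ t) {x : ℂ} (hx : IsingZ E J u₀ v₀ t x = 0) :
    x.im = 0 := by
  have key : ∀ y : ℂ, IsingZ E J u₀ v₀ t y = 0 → y.im ≤ 0 := by
    intro y hy
    by_contra! hpos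
    rw [isingZ_eq_spinPoly] at hy
    refine leeYang_isingWeight E J u₀ v₀ hJ ht _ (fun _ => ?_)
      ((mul_eq_zero.1 hy).resolve_left (Complex.exp_ne_zero _))
    rw [Complex.norm_exp, Real.exp_lt_one_iff]
    simpa using hpos
  refine le_antisymm (key x hx) ?_
  simpa using key (-x) (by rwa [isingZ_neg])

theorem isingZ_zero_ne_zero (E : Finset (Sym2 V)) (J : Sym2 V → ℝ) (u₀ v₀ : V) (t : ℝ) :
    IsingZ E J u₀ v₀ t 0 ≠ 0 := by
  rw [isingZ_eq_sum]
  simp only [mul_zero, zero_mul, Complex.exp_zero, mul_one]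
  exact_mod_cast (Finset.sum_pos (fun σ _ => Real.exp_pos _) Finset.univ_nonempty).ne'

end

open Polynomial in
/-- Polynomials expressing `cos ((2 * k + ε) * x) / cos x ^ ε` in terms of `sin x ^ 2`
for `ε = 0` (with `c = 2`) and `ε = 1` (with `c = 4`). -/
noncomputable def cosPoly (c : ℝ) : ℕ → ℂ[X]
  | 0 => 1
  | 1 => 1 - C (c : ℂ) * X
  | k + 2 => 2 * (1 - 2 * X) * cosPoly c (k + 1) - cosPoly c k

open Polynomial in
theorem natDegree_cosPoly_le (c : ℝ) (k : ℕ) : (cosPoly c k).natDegree ≤ k := by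
  induction k using Nat.twoStepInduction with
  | zero => simp [cosPoly]
  | one => rw [cosPoly]; compute_degree
  | more k ih₀ ih₁ =>
    rw [cosPoly]
    have h : (2 * (1 - 2 * X) : ℂ[X]).natDegree ≤ 1 := by compute_degree
    refine (natDegree_sub_le_of_le (natDegree_mul_le_of_le h ih₁) ih₀).trans ?_
    omega

open Polynomial in
theorem coeff_cosPoly_ne_zero {c : ℝ} (hc : c ≠ 0) (k : ℕ) : (cosPoly c k).coeff k ≠ 0 := by
  have step : ∀ k, (cosPoly c (k + 2)).coeff (k + 2) = -4 * (cosPoly c (k + 1)).coeff (k + 1) := by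
    intro k
    have h₀ := coeff_eq_zero_of_natDegree_lt
      ((natDegree_cosPoly_le c k).trans_lt (show k < k + 2 by omega))
    have h₁ := coeff_eq_zero_of_natDegree_lt
      ((natDegree_cosPoly_le c (k + 1)).trans_lt (show k + 1 < k + 2 by omega))
    have : cosPoly c (k + 2) = C 2 * cosPoly c (k + 1) - C 4 * (X * cosPoly c (k + 1))
        - cosPoly c k := by
      rw [cosPoly, C_ofNat, C_ofNat]; ring
    rw [this, coeff_sub, coeff_sub, coeff_C_mul, coeff_C_mul, coeff_X_mul, h₀, h₁]
    ring
  rcases k with _ | k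
  · simp [cosPoly]
  · induction k with
    | zero => simpa [cosPoly, coeff_one] using hc
    | succ k ih => rw [step]; exact mul_ne_zero (by norm_num) ih

open Polynomial in
theorem cos_eq_eval_cosPoly {ε : ℕ} (hε : ε < 2) (k : ℕ) (x : ℂ) :
    Complex.cos ((2 * k + ε : ℕ) * x)
      = Complex.cos x ^ ε * (cosPoly (2 * (ε + 1)) k).eval (Complex.sin x ^ 2) := by
  have hs := Complex.sin_sq x
  induction k using Nat.twoStepInduction with
  | zero => interval_cases ε <;> simp [cosPoly]
  | one =>
    interval_cases ε
    · simp [cosPoly, Complex.cos_two_mul, hs]; ring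
    · simp [cosPoly, hs, Complex.cos_three_mul]; ring
  | more k ih₀ ih₁ =>
    have h2 : Complex.cos (2 * x) = 1 - 2 * Complex.sin x ^ 2 := by
      rw [Complex.cos_two_mul, hs]; ring
    have e₀ : ((2 * k + ε : ℕ) : ℂ) * x = (2 * (k + 1) + ε : ℕ) * x - 2 * x := by push_cast; ring
    have e₂ : ((2 * (k + 2) + ε : ℕ) : ℂ) * x = (2 * (k + 1) + ε : ℕ) * x + 2 * x := by
      push_cast; ring
    rw [e₀, Complex.cos_sub] at ih₀
    rw [e₂, Complex.cos_add, cosPoly]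
    simp only [eval_sub, eval_mul, eval_one, eval_ofNat, eval_X]
    linear_combination -ih₀ + 2 * (1 - 2 * Complex.sin x ^ 2) * ih₁
      + 2 * Complex.cos ((2 * (k + 1) + ε : ℕ) * x) * h2

open Polynomial in
theorem exists_polynomial_isingZ {V : Type} [Fintype V] [DecidableEq V]
    (E : Finset (Sym2 V)) (J : Sym2 V → ℝ) (u₀ v₀ : V) (t : ℝ) :
    ∃ Q : ℂ[X], Q.natDegree = Fintype.card V / 2 ∧ ∀ x, IsingZ E J u₀ v₀ t x
      = Complex.cos x ^ (Fintype.card V % 2) * Q.eval (Complex.sin x ^ 2) := by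
  set n := Fintype.card V with hn
  set c : ℝ := 2 * ((n % 2 : ℕ) + 1) with hc
  let P : (V → Bool) → ℂ[X] := fun σ => cosPoly c ((totalSpin σ).natAbs / 2)
  have hle (σ : V → Bool) : (totalSpin σ).natAbs / 2 ≤ n / 2 :=
    Nat.div_le_div_right (natAbs_totalSpin_le σ)
  refine ⟨∑ σ, C (isingWeight E J u₀ v₀ t σ : ℂ) * P σ, ?_, fun x => ?_⟩
  · refine natDegree_eq_of_le_of_coeff_ne_zero ?_ ?_
    · refine natDegree_sum_le_of_forall_le _ _ fun σ _ => ?_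
      exact (natDegree_C_mul_le _ _).trans ((natDegree_cosPoly_le _ _).trans (hle σ))
    · have hcoeff (σ : V → Bool) : (P σ).coeff (n / 2)
          = ((if (totalSpin σ).natAbs / 2 = n / 2 then 1 else 0 : ℝ) : ℂ)
            * (cosPoly c (n / 2)).coeff (n / 2) := by
        split_ifs with h
        · simp [P, h]
        · rw [coeff_eq_zero_of_natDegree_lt
            ((natDegree_cosPoly_le _ _).trans_lt (lt_of_le_of_ne (hle σ) h))]
          simp
      simp only [finsetSum_coeff, coeff_C_mul, hcoeff, ← mul_assoc, ← Finset.sum_mul]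
      refine mul_ne_zero ?_ (coeff_cosPoly_ne_zero (by positivity) _)
      norm_cast
      refine (Finset.sum_pos' (fun σ _ => ?_) ⟨fun _ => true, Finset.mem_univ _, ?_⟩).ne'
      · exact mul_nonneg (Real.exp_pos _).le (by split_ifs <;> simp)
      · rw [totalSpin_true, Int.natAbs_natCast, if_pos rfl]
        rw [Nat.cast_one, mul_one]
        exact Real.exp_pos _
  · rw [isingZ_eq_sum_cos, eval_finsetSum, Finset.mul_sum]
    refine Finset.sum_congr rfl fun σ _ => ?_
    have hm : (totalSpin σ).natAbs = 2 * ((totalSpin σ).natAbs / 2) + n % 2 := by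
      have := natAbs_totalSpin_mod_two σ
      omega
    conv_lhs => rw [hm, cos_eq_eval_cosPoly (Nat.mod_lt _ two_pos)]
    rw [eval_mul, eval_C]
    simp only [P, hc]
    ring

open Polynomial in
theorem exists_sin_sq_factorization {Q : ℂ[X]} (h0 : Q.eval 0 ≠ 0)
    (hroots : ∀ r : ℂ, Q.eval r = 0 → ∃ y : ℝ, 0 < y ∧ y ≤ π / 2 ∧
      ((Real.sin y ^ 2 : ℝ) : ℂ) = r) :
    ∃ x : ℕ → ℝ,
      (∀ k ∈ Finset.Icc 1 Q.natDegree, 0 < x k ∧ x k ≤ π / 2) ∧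
      (∀ k, 1 ≤ k → k < Q.natDegree → x k ≤ x (k + 1)) ∧
      ∀ s : ℂ, Q.eval s = Q.eval 0 * ∏ j ∈ Finset.Icc 1 Q.natDegree,
        (((Real.sin (x j) ^ 2 : ℝ) : ℂ) - s) / ((Real.sin (x j) ^ 2 : ℝ) : ℂ) := by
  have hQ : Q ≠ 0 := by rintro rfl; simp at h0
  choose! g hg0 hg1 hg2 using hroots
  set L : List ℝ := (Q.roots.map g).sort (· ≤ ·) with hL
  have hcoe : (L : Multiset ℝ) = Q.roots.map g := Multiset.sort_eq _ _
  have hsplit : Q.Splits := IsAlgClosed.splits Q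
  have hlen : L.length = Q.natDegree := by
    rw [hL, Multiset.length_sort, Multiset.card_map, hsplit.natDegree_eq_card_roots]
  have hmem : ∀ y ∈ L, 0 < y ∧ y ≤ π / 2 := by
    intro y hy
    rw [← Multiset.mem_coe, hcoe, Multiset.mem_map] at hy
    obtain ⟨r, hr, rfl⟩ := hy
    have := (mem_roots hQ).1 hr
    exact ⟨hg0 r this, hg1 r this⟩
  have hprod : ∀ F : ℝ → ℂ, ∏ j ∈ Finset.Icc 1 Q.natDegree, F (L.getD (j - 1) 0)
      = (Q.roots.map fun r => F (g r)).prod := by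
    intro F
    have h1 : (Q.roots.map fun r => F (g r)).prod = (L.map F).prod := by
      rw [← Multiset.prod_coe, ← Multiset.map_coe, hcoe, Multiset.map_map]; rfl
    rw [h1, ← hlen, ← Finset.Ico_add_one_right_eq_Icc, Finset.prod_Ico_eq_prod_range,
      Finset.prod_range, ← Fin.prod_univ_fun_getElem]
    simp
  refine ⟨fun k => L.getD (k - 1) 0, fun k hk => ?_, fun k hk hk' => ?_, fun s => ?_⟩
  · rw [Finset.mem_Icc] at hk
    have : k - 1 < L.length := by omega
    simp only [List.getD_eq_getElem _ _ this]
    exact hmem _ (List.getElem_mem _)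
  · have h1 : k - 1 < L.length := by omega
    have h2 : k + 1 - 1 < L.length := by omega
    simp only [List.getD_eq_getElem _ _ h1, List.getD_eq_getElem _ _ h2]
    exact List.pairwise_iff_getElem.1 (Multiset.pairwise_sort _ _) _ _ h1 h2 (by omega)
  · rw [hprod fun y => (((Real.sin y ^ 2 : ℝ) : ℂ) - s) / ((Real.sin y ^ 2 : ℝ) : ℂ)]
    have heval : ∀ s, Q.eval s = Q.leadingCoeff * (Q.roots.map fun r => s - r).prod := by
      intro s
      conv_lhs => rw [hsplit.eq_prod_roots]
      simp [eval_multiset_prod, Multiset.map_map]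
    rw [heval s, heval 0, mul_assoc, ← Multiset.prod_map_mul]
    congr 2
    refine Multiset.map_congr rfl fun r hr => ?_
    have hr0 := (mem_roots hQ).1 hr
    have hne : r ≠ 0 := by rintro rfl; exact h0 hr0
    rw [hg2 r hr0]
    field_simp
    ring

theorem exists_mem_Ioc_sin_sq_eq {y : ℝ} (hy : Real.sin y ≠ 0) :
    ∃ w : ℝ, 0 < w ∧ w ≤ π / 2 ∧ Real.sin w ^ 2 = Real.sin y ^ 2 := by
  have h1 : |Real.sin y| ≤ 1 := Real.abs_sin_le_one y
  have h0 : 0 < |Real.sin y| := abs_pos.2 hy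
  refine ⟨Real.arcsin |Real.sin y|, Real.arcsin_pos.2 h0, Real.arcsin_le_pi_div_two _, ?_⟩
  rw [Real.sin_arcsin (by linarith) h1, sq_abs]

theorem isingZ_factorization {V : Type} [Fintype V] [DecidableEq V]
    (E : Finset (Sym2 V)) (J : Sym2 V → ℝ) (u₀ v₀ : V) (hJ : ∀ e ∈ E, 0 ≤ J e)
    {t : ℝ} (ht : 0 ≤ t) :
    ∃ x : ℕ → ℝ,
      (∀ k ∈ Finset.Icc 1 (Fintype.card V / 2), 0 < x k ∧ x k ≤ π / 2) ∧
      (∀ k, 1 ≤ k → k < Fintype.card V / 2 → x k ≤ x (k + 1)) ∧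
      ∀ z : ℂ, IsingZ E J u₀ v₀ t z
        = IsingZ E J u₀ v₀ t 0 * Complex.cos z ^ (Fintype.card V % 2) *
          ∏ j ∈ Finset.Icc 1 (Fintype.card V / 2),
            (((Real.sin (x j) ^ 2 : ℝ) : ℂ) - Complex.sin z ^ 2)
              / ((Real.sin (x j) ^ 2 : ℝ) : ℂ) := by
  obtain ⟨Q, hdeg, hQ⟩ := exists_polynomial_isingZ E J u₀ v₀ t
  have hZ0 : IsingZ E J u₀ v₀ t 0 = Q.eval 0 := by simp [hQ]
  have h0 : Q.eval 0 ≠ 0 := hZ0 ▸ isingZ_zero_ne_zero E J u₀ v₀ t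
  obtain ⟨x, hx, hmono, hfac⟩ := exists_sin_sq_factorization h0 (fun r hr => by
    obtain ⟨q, hq⟩ := IsAlgClosed.exists_pow_nat_eq r two_pos
    obtain ⟨y, rfl⟩ := Complex.sin_surjective q
    have him := im_eq_zero_of_isingZ_eq_zero E J u₀ v₀ hJ ht
      (x := y) (by rw [hQ, hq, hr, mul_zero])
    obtain ⟨y, rfl⟩ : ∃ w : ℝ, (w : ℂ) = y := ⟨y.re, Complex.ext rfl (by simp [him])⟩
    have hs : Real.sin y ≠ 0 := by
      intro hs
      rw [← Complex.ofReal_sin, hs] at hq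
      exact h0 (by rwa [← hq, Complex.ofReal_zero, zero_pow two_ne_zero] at hr)
    obtain ⟨w, hw0, hw1, hw⟩ := exists_mem_Ioc_sin_sq_eq hs
    exact ⟨w, hw0, hw1, by rw [hw, ← hq]; simp⟩)
  rw [hdeg] at hx hmono hfac
  refine ⟨x, hx, hmono, fun z => ?_⟩
  rw [hZ0, hQ, hfac]
  ring

theorem stmt3 {V : Type} [Fintype V] [DecidableEq V]
    (E : Finset (Sym2 V)) (J : Sym2 V → ℝ) (u₀ v₀ : V)
    (hE : s(u₀, v₀) ∈ E)
    (hferro : ∀ e ∈ E, 0 ≤ J e)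
    (n : ℕ) (hn : n = Fintype.card V)
    (t : ℝ) (ht : 0 ≤ t) :
    (Even n → ∃ x : ℕ → ℝ,
      (∀ k ∈ Finset.Icc 1 (n / 2), 0 < x k ∧ x k ≤ π / 2) ∧
      (∀ k, 1 ≤ k → k < n / 2 → x k ≤ x (k + 1)) ∧
      ∀ z : ℂ, IsingZ E J u₀ v₀ t z
        = IsingZ E J u₀ v₀ t 0 *
          ∏ j ∈ Finset.Icc 1 (n / 2),
            (((Real.sin (x j) ^ 2 : ℝ) : ℂ) - Complex.sin z ^ 2)
              / ((Real.sin (x j) ^ 2 : ℝ) : ℂ)) ∧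
    (Odd n → ∃ x : ℕ → ℝ,
      (∀ k ∈ Finset.Icc 1 ((n - 1) / 2), 0 < x k ∧ x k ≤ π / 2) ∧
      (∀ k, 1 ≤ k → k < (n - 1) / 2 → x k ≤ x (k + 1)) ∧
      ∀ z : ℂ, IsingZ E J u₀ v₀ t z
        = IsingZ E J u₀ v₀ t 0 * Complex.cos z *
          ∏ j ∈ Finset.Icc 1 ((n - 1) / 2),
            (((Real.sin (x j) ^ 2 : ℝ) : ℂ) - Complex.sin z ^ 2)
              / ((Real.sin (x j) ^ 2 : ℝ) : ℂ)) := by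
  subst hn
  obtain ⟨x, hx, hmono, hfac⟩ := isingZ_factorization E J u₀ v₀ hferro ht
  refine ⟨fun h => ⟨x, hx, hmono, fun z => ?_⟩, fun h => ?_⟩
  · rw [hfac z, Nat.even_iff.1 h, pow_zero, mul_one]
  · have hdiv : (Fintype.card V - 1) / 2 = Fintype.card V / 2 := by
      have := Nat.odd_iff.1 h
      omega
    rw [hdiv]
    refine ⟨x, hx, hmono, fun z => ?_⟩
    rw [hfac z, Nat.odd_iff.1 h, pow_one]
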